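/- Let S be a Boolean inverse semigroup. Then: (1) if S is semisimple, the groupoid G(S) of prime filters of S is isomorphic to the groupoid of atoms of S under the restricted product, via the map sending an atom a to the ultrafilter a↑; (2) S is semisimple if and only if the topology on G(S) (with basic open sets V_a = {prime filters containing a}) is discrete. -/

import Mathlib

namespace Paper

/-- An inverse semigroup with zero: an associative multiplication, a zero that is
absorbing, and a map `⁻¹` sending each element to its unique generalized inverse. -/
class IsInverseSemigroup (S : Type*) [Mul S] [Zero S] [Inv S] : Prop where
  mul_assoc : ∀ a b c : S, a * b * c = a * (b * c)
  mul_inv_mul : ∀ a : S, a * a⁻¹ * a = a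
  inv_mul_inv : ∀ a : S, a⁻¹ * a * a⁻¹ = a⁻¹
  inv_unique : ∀ a b : S, a * b * a = a → b * a * b = b → b = a⁻¹
  zero_mul : ∀ a : S, 0 * a = 0
  mul_zero : ∀ a : S, a * 0 = 0

variable {S : Type*} [Mul S] [Zero S] [Inv S]

/-- The natural partial order: `a ≤ b` iff `a = b * a⁻¹ * a`. -/
def nle (a b : S) : Prop := a = b * a⁻¹ * a

/-- `e` is an idempotent. -/
def idem (e : S) : Prop := e * e = e

/-- `a` and `b` are compatible. -/
def compat (a b : S) : Prop := idem (a⁻¹ * b) ∧ idem (a * b⁻¹)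

/-- `a` and `b` are orthogonal. -/
def orth (a b : S) : Prop := a⁻¹ * b = 0 ∧ a * b⁻¹ = 0

/-- `j` is the least upper bound of `a` and `b` for the natural partial order. -/
def isJoin (a b j : S) : Prop :=
  nle a j ∧ nle b j ∧ ∀ c : S, nle a c → nle b c → nle j c

/-- `m` is the greatest lower bound of `a` and `b` for the natural partial order. -/
def isMeet (a b m : S) : Prop :=
  nle m a ∧ nle m b ∧ ∀ c : S, nle c a → nle c b → nle c m

/-- `a` is an atom: a nonzero element with nothing strictly between it and `0`. -/
def isAtomElem (a : S) : Prop := a ≠ 0 ∧ ∀ x : S, nle x a → x = a ∨ x = 0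

/-- `s` is the least upper bound of the finite family `f`. -/
def isJoinFin {m : ℕ} (f : Fin m → S) (s : S) : Prop :=
  (∀ i, nle (f i) s) ∧ ∀ c : S, (∀ i, nle (f i) c) → nle s c

/-- A Boolean inverse semigroup: a nonzero inverse semigroup with zero in which
compatible pairs have joins, multiplication distributes over binary compatible joins,
and the idempotents form a generalized Boolean algebra under the natural partial
order (meets of idempotents are automatically given by multiplication; the extra
requirement is the existence of relative complements). -/
class IsBooleanInverseSemigroup (S : Type*) [Mul S] [Zero S] [Inv S]
    extends IsInverseSemigroup S : Prop where
  exists_ne_zero : ∃ a : S, a ≠ 0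
  compat_join : ∀ a b : S, compat a b → ∃ j, isJoin a b j
  mul_join : ∀ a b j c : S, isJoin a b j → isJoin (c * a) (c * b) (c * j)
  join_mul : ∀ a b j c : S, isJoin a b j → isJoin (a * c) (b * c) (j * c)
  relcomp : ∀ e f : S, idem e → idem f → nle f e →
    ∃ g : S, idem g ∧ nle g e ∧ g * f = 0 ∧ isJoin f g e


/-- The principal up-set of `a`. -/
def upSet {S : Type*} [Mul S] [Inv S] (a : S) : Set S := {x | nle a x}

/-- The upward closure of a set for the natural partial order. -/
def upClosure {S : Type*} [Mul S] [Inv S] (A : Set S) : Set S :=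
  {x | ∃ a ∈ A, nle a x}

/-- The setwise product. -/
def setProd {S : Type*} [Mul S] (A B : Set S) : Set S :=
  {z | ∃ a ∈ A, ∃ b ∈ B, z = a * b}

/-- The setwise inverse. -/
def invSet {S : Type*} [Inv S] (A : Set S) : Set S := {x | ∃ a ∈ A, x = a⁻¹}

/-- A filter: a nonempty, down-directed, upward-closed subset. -/
def isFilterSet {S : Type*} [Mul S] [Inv S] (F : Set S) : Prop :=
  F.Nonempty ∧ (∀ a ∈ F, ∀ b ∈ F, ∃ c ∈ F, nle c a ∧ nle c b) ∧
    ∀ a ∈ F, ∀ b : S, nle a b → b ∈ F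

/-- A prime filter: a proper filter such that `a ∨ b ∈ F` implies `a ∈ F` or
`b ∈ F`. -/
def isPrimeFilter {S : Type*} [Mul S] [Zero S] [Inv S] (F : Set S) : Prop :=
  isFilterSet F ∧ (0 : S) ∉ F ∧
    ∀ a b j : S, isJoin a b j → j ∈ F → a ∈ F ∨ b ∈ F

/-- The set of prime filters of `S` (the underlying set of the groupoid `G(S)`). -/
def PrimeFilters (S : Type*) [Mul S] [Zero S] [Inv S] :=
  {F : Set S // isPrimeFilter F}

/-!
For `x, y ≤ j` the element `x * d(y) = y * d(x)` lies below both, and if `j = x ∨ y` then every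
`z ≤ j` is recovered as `z * d(x) ∨ z * d(y)`. By Zorn's lemma this yields a prime filter theorem:
an element outside a join-closed lower set lies in a prime filter avoiding that set. Applied to
`x↓` it shows that `a` is an atom as soon as `V_a` is a singleton; applied to the set of all `x`
with `x↓` finite it shows that `S` is semisimple as soon as every prime filter contains an atom.
Conversely, if `S` is semisimple, every prime filter has a minimal element, and splitting that
element by a relative complement shows that it is an atom.
-/

theorem idem.mul_self {M : Type*} [Mul M] {e : M} (he : idem e) : e * e = e := he

/-- The domain idempotent `d(a)` of an element. -/
def dom (a : S) : S := a⁻¹ * a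

section InverseSemigroup

variable [IsInverseSemigroup S] {a b c e f : S}

instance : SemigroupWithZero S where
  mul_assoc := IsInverseSemigroup.mul_assoc
  zero_mul := IsInverseSemigroup.zero_mul
  mul_zero := IsInverseSemigroup.mul_zero

instance : InvolutiveInv S where
  inv_inv a := (IsInverseSemigroup.inv_unique a⁻¹ a (IsInverseSemigroup.inv_mul_inv a)
    (IsInverseSemigroup.mul_inv_mul a)).symm

theorem mul_dom_self (a : S) : a * dom a = a := by
  rw [dom, ← mul_assoc, IsInverseSemigroup.mul_inv_mul]

theorem idem_dom (a : S) : idem (dom a) := by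
  rw [idem, dom, mul_assoc, ← mul_assoc a, IsInverseSemigroup.mul_inv_mul]

theorem dom_inv (a : S) : dom a⁻¹ = a * a⁻¹ := by
  rw [dom, inv_inv]

theorem idem_zero : idem (0 : S) := zero_mul 0

theorem idem.inv_eq (he : idem e) : e⁻¹ = e := by
  have eee : e * e * e = e := by rw [he.mul_self, he.mul_self]
  exact (IsInverseSemigroup.inv_unique e e eee eee).symm

-- The inverse `x` of `e * f` equals `f * x * e`, which makes `x`, and hence `e * f`, idempotent.
theorem idem.mul (he : idem e) (hf : idem f) : idem (e * f) := by
  set x := (e * f)⁻¹ with hx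
  have left : e * f * x * (e * f) = e * f := IsInverseSemigroup.mul_inv_mul _
  have right : x * (e * f) * x = x := IsInverseSemigroup.inv_mul_inv _
  have x_eq : f * x * e = x := by
    apply IsInverseSemigroup.inv_unique
    · calc e * f * (f * x * e) * (e * f) = e * (f * f) * x * ((e * e) * f) := by
            simp only [mul_assoc]
        _ = e * f := by rw [he.mul_self, hf.mul_self, left]
    · calc f * x * e * (e * f) * (f * x * e) = f * (x * ((e * e) * (f * f)) * x) * e := by
            simp only [mul_assoc]
        _ = f * x * e := by rw [he.mul_self, hf.mul_self, right]
  have idem_x : idem x := by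
    calc x * x = f * x * e * (f * x * e) := by rw [x_eq]
      _ = f * (x * (e * f) * x) * e := by simp only [mul_assoc]
      _ = x := by rw [right, x_eq]
  rwa [← inv_inv (e * f), ← hx, idem_x.inv_eq]

theorem idem.mul_comm (he : idem e) (hf : idem f) : e * f = f * e := by
  have inverse {e f : S} (he : idem e) (hf : idem f) : e * f * (f * e) * (e * f) = e * f := by
    calc e * f * (f * e) * (e * f) = e * (f * f) * ((e * e) * f) := by simp only [mul_assoc]
      _ = e * f := by rw [he.mul_self, hf.mul_self, (he.mul hf).mul_self]
  rw [IsInverseSemigroup.inv_unique _ _ (inverse he hf) (inverse hf he), (he.mul hf).inv_eq]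

theorem mul_inv_rev (a b : S) : (a * b)⁻¹ = b⁻¹ * a⁻¹ := by
  have inverse (a b : S) : a * b * (b⁻¹ * a⁻¹) * (a * b) = a * b := by
    calc a * b * (b⁻¹ * a⁻¹) * (a * b) = a * (dom b⁻¹ * dom a) * b := by
          simp only [dom, inv_inv, mul_assoc]
      _ = a * (dom a * dom b⁻¹) * b := by rw [(idem_dom _).mul_comm (idem_dom _)]
      _ = a * dom a * (b * dom b) := by simp only [dom, inv_inv, mul_assoc]
      _ = a * b := by rw [mul_dom_self, mul_dom_self]
  have inverse' := inverse b⁻¹ a⁻¹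
  rw [inv_inv, inv_inv] at inverse'
  exact (IsInverseSemigroup.inv_unique _ _ (inverse a b) inverse').symm

theorem idem.conj (he : idem e) (a : S) : idem (a⁻¹ * e * a) := by
  calc a⁻¹ * e * a * (a⁻¹ * e * a) = a⁻¹ * (e * dom a⁻¹) * e * a := by
        simp only [dom_inv, mul_assoc]
    _ = a⁻¹ * (dom a⁻¹ * e) * e * a := by rw [he.mul_comm (idem_dom _)]
    _ = a⁻¹ * dom a⁻¹ * (e * e) * a := by simp only [mul_assoc]
    _ = a⁻¹ * e * a := by rw [mul_dom_self, he.mul_self]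

theorem idem.mul_eq_mul_conj (he : idem e) (a : S) : e * a = a * (a⁻¹ * e * a) := by
  calc e * a = e * dom a⁻¹ * a := by
        rw [dom_inv, mul_assoc, IsInverseSemigroup.mul_inv_mul]
    _ = dom a⁻¹ * e * a := by rw [he.mul_comm (idem_dom _)]
    _ = a * (a⁻¹ * e * a) := by simp only [dom_inv, mul_assoc]

theorem dom_mul_of_idem (a : S) (he : idem e) : dom (a * e) = dom a * e := by
  calc dom (a * e) = e * dom a * e := by simp only [dom, mul_inv_rev, he.inv_eq, mul_assoc]
    _ = dom a * (e * e) := by rw [he.mul_comm (idem_dom a), mul_assoc]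
    _ = dom a * e := by rw [he.mul_self]

theorem nle_iff_mul_dom : nle a b ↔ b * dom a = a := by
  rw [nle, dom, mul_assoc, eq_comm]

theorem nle_iff_exists_idem : nle a b ↔ ∃ e, idem e ∧ b * e = a := by
  rw [nle_iff_mul_dom]
  refine ⟨fun h ↦ ⟨dom a, idem_dom a, h⟩, ?_⟩
  rintro ⟨e, he, rfl⟩
  rw [dom_mul_of_idem b he, ← mul_assoc, mul_dom_self]

instance : PartialOrder S where
  le := nle
  le_refl a := nle_iff_mul_dom.2 (mul_dom_self a)
  le_trans a b c hab hbc := by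
    obtain ⟨e, he, rfl⟩ := nle_iff_exists_idem.1 hab
    obtain ⟨f, hf, rfl⟩ := nle_iff_exists_idem.1 hbc
    exact nle_iff_exists_idem.2 ⟨f * e, hf.mul he, (mul_assoc c f e).symm⟩
  le_antisymm a b hab hba := by
    rw [nle_iff_mul_dom] at hab hba
    calc a = b * dom b * dom a := by rw [mul_dom_self, hab]
      _ = b * dom a * dom b := by
        rw [mul_assoc, (idem_dom b).mul_comm (idem_dom a), ← mul_assoc]
      _ = b := by rw [hab, hba]

theorem le_iff_mul_dom : a ≤ b ↔ b * dom a = a := nle_iff_mul_dom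

theorem le_iff_exists_idem : a ≤ b ↔ ∃ e, idem e ∧ b * e = a := nle_iff_exists_idem

theorem mul_le_of_idem (a : S) (he : idem e) : a * e ≤ a := le_iff_exists_idem.2 ⟨e, he, rfl⟩

theorem mul_dom_le (a b : S) : a * dom b ≤ a := mul_le_of_idem a (idem_dom b)

theorem inv_mono (h : a ≤ b) : a⁻¹ ≤ b⁻¹ := by
  obtain ⟨e, he, rfl⟩ := le_iff_exists_idem.1 h
  rw [mul_inv_rev, he.inv_eq, he.mul_eq_mul_conj]
  exact mul_le_of_idem _ (he.conj _)

instance : MulLeftMono S where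
  elim c a b h := by
    obtain ⟨e, he, rfl⟩ := le_iff_exists_idem.1 h
    exact le_iff_exists_idem.2 ⟨e, he, mul_assoc c b e⟩

instance : MulRightMono S where
  elim c a b h := by
    obtain ⟨e, he, rfl⟩ := le_iff_exists_idem.1 h
    refine le_iff_exists_idem.2 ⟨c⁻¹ * e * c, he.conj c, ?_⟩
    change b * c * (c⁻¹ * e * c) = b * e * c
    rw [mul_assoc b c, ← he.mul_eq_mul_conj, mul_assoc]

instance : IsBotZeroClass S where
  isBot_zero a := le_iff_exists_idem.2 ⟨0, idem_zero, mul_zero a⟩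

theorem dom_mono (h : a ≤ b) : dom a ≤ dom b := mul_le_mul' (inv_mono h) h

theorem mul_dom_comm_of_le (ha : a ≤ c) (hb : b ≤ c) : a * dom b = b * dom a := by
  rw [le_iff_mul_dom] at ha hb
  calc a * dom b = c * dom a * dom b := by rw [ha]
    _ = c * dom b * dom a := by
      rw [mul_assoc, (idem_dom a).mul_comm (idem_dom b), ← mul_assoc]
    _ = b * dom a := by rw [hb]

theorem mul_dom_le_right (ha : a ≤ c) (hb : b ≤ c) : a * dom b ≤ b :=
  (mul_dom_comm_of_le ha hb).trans_le (mul_dom_le b a)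

theorem isJoin.left_le (h : isJoin a b c) : a ≤ c := h.1

theorem isJoin.right_le (h : isJoin a b c) : b ≤ c := h.2.1

theorem isJoin.le (h : isJoin a b c) (ha : a ≤ e) (hb : b ≤ e) : c ≤ e := h.2.2 e ha hb

theorem isJoin.unique (hc : isJoin a b c) (he : isJoin a b e) : c = e :=
  le_antisymm (hc.le he.left_le he.right_le) (he.le hc.left_le hc.right_le)

theorem isAtomElem.eq_of_le (ha : isAtomElem a) (hba : b ≤ a) (hb : b ≠ 0) : b = a :=
  (ha.2 b hba).resolve_right hb

theorem upSet_injective : Function.Injective (upSet : S → Set S) :=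
  fun _ _ h ↦ Set.Ici_injective h

theorem invSet_upSet (a : S) : invSet (upSet a) = upSet a⁻¹ := by
  ext x
  constructor
  · rintro ⟨y, hy, rfl⟩
    exact inv_mono hy
  · intro hx
    refine ⟨x⁻¹, ?_, (inv_inv x).symm⟩
    have ha := inv_mono hx
    rwa [inv_inv] at ha

theorem upClosure_setProd_upSet (a b : S) :
    upClosure (setProd (upSet a) (upSet b)) = upSet (a * b) := by
  ext x
  constructor
  · rintro ⟨_, ⟨y, hy, z, hz, rfl⟩, hx⟩
    exact le_trans (b := y * z) (mul_le_mul' hy hz) hx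
  · exact fun hx ↦ ⟨a * b, ⟨a, le_refl a, b, le_refl b, rfl⟩, hx⟩

end InverseSemigroup

section Filters

variable [IsInverseSemigroup S] {a j x : S} {F I : Set S}

theorem isFilterSet.directedOn (hF : isFilterSet F) : DirectedOn (· ≥ ·) F := hF.2.1

theorem isFilterSet.isUpperSet (hF : isFilterSet F) : IsUpperSet F :=
  fun a b hab ha ↦ hF.2.2 a ha b hab

theorem isFilterSet_upClosure {D : Set S} (hne : D.Nonempty) (hD : DirectedOn (· ≥ ·) D) :
    isFilterSet (upClosure D) := by
  refine ⟨hne.mono fun x hx ↦ ⟨x, hx, le_refl x⟩, ?_, ?_⟩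
  · rintro x ⟨a, ha, hax⟩ y ⟨b, hb, hby⟩
    obtain ⟨c, hc, hca, hcb⟩ := hD a ha b hb
    exact ⟨c, ⟨c, hc, le_refl c⟩, le_trans hca hax, le_trans hcb hby⟩
  · rintro x ⟨a, ha, hax⟩ y hxy
    exact ⟨a, ha, (le_trans hax hxy : a ≤ y)⟩

theorem isFilterSet_upSet (a : S) : isFilterSet (upSet a) :=
  ⟨⟨a, le_refl a⟩, fun _ hx _ hy ↦ ⟨a, le_refl a, hx, hy⟩,
    fun _ hx y hxy ↦ (le_trans hx hxy : a ≤ y)⟩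

theorem isFilterSet_sUnion {C : Set (Set S)} (hC : ∀ F ∈ C, isFilterSet F)
    (chain : IsChain (· ⊆ ·) C) (hne : C.Nonempty) : isFilterSet (⋃₀ C) := by
  obtain ⟨F, hF⟩ := hne
  refine ⟨(hC F hF).1.mono (Set.subset_sUnion_of_mem hF), ?_, ?_⟩
  · exact Set.directedOn_sUnion chain.directedOn fun F hF ↦ (hC F hF).directedOn
  · exact fun a ha b hab ↦ isUpperSet_sUnion (fun F hF ↦ (hC F hF).isUpperSet) hab ha

theorem isPrimeFilter.eq_upSet_of_mem (hF : isPrimeFilter F) (ha : isAtomElem a) (haF : a ∈ F) :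
    F = upSet a := by
  refine Set.Subset.antisymm (fun b hb ↦ ?_) (fun b hab ↦ hF.1.isUpperSet hab haF)
  obtain ⟨c, hc, hca, hcb⟩ := hF.1.directedOn a haF b hb
  have c_eq : c = a := ha.eq_of_le hca (ne_of_mem_of_not_mem hc hF.2.1)
  exact c_eq ▸ hcb

theorem exists_maximal_filter_disjoint (hI : IsLowerSet I) (ha : a ∉ I) :
    ∃ F, a ∈ F ∧ Maximal (fun F ↦ isFilterSet F ∧ Disjoint F I) F := by
  have disjoint_upSet : Disjoint (upSet a) I :=
    Set.disjoint_left.2 fun x hax hx ↦ ha (hI hax hx)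
  obtain ⟨F, hF, hmax⟩ := zorn_subset_nonempty {F | isFilterSet F ∧ Disjoint F I}
    (fun C hC chain hne ↦ ⟨⋃₀ C,
      ⟨isFilterSet_sUnion (fun F hF ↦ (hC hF).1) chain hne,
        Set.disjoint_sUnion_left.2 fun F hF ↦ (hC hF).2⟩,
      fun _ ↦ Set.subset_sUnion_of_mem⟩)
    (upSet a) ⟨isFilterSet_upSet a, disjoint_upSet⟩
  exact ⟨F, hF (le_refl a), hmax⟩

-- Otherwise the filter generated by `F * d(x)` is disjoint from `I` and contains `F` and `x`.
theorem exists_mul_dom_mem_of_maximal (hI : IsLowerSet I)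
    (hF : Maximal (fun F ↦ isFilterSet F ∧ Disjoint F I) F) (hj : j ∈ F) (hxj : x ≤ j)
    (hx : x ∉ F) : ∃ z ∈ F, z * dom x ∈ I := by
  by_contra! hdisj
  have filter : isFilterSet (upClosure ((· * dom x) '' F)) :=
    isFilterSet_upClosure ⟨_, j, hj, rfl⟩
      (hF.prop.1.directedOn.mono_comp fun _ _ h ↦ mul_le_mul_left h (dom x))
  have disjoint : Disjoint (upClosure ((· * dom x) '' F)) I := by
    refine Set.disjoint_left.2 ?_
    rintro w ⟨_, ⟨z, hz, rfl⟩, hzw⟩ hw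
    exact hdisj z hz (hI hzw hw)
  have subset : upClosure ((· * dom x) '' F) ⊆ F :=
    hF.le_of_ge ⟨filter, disjoint⟩ fun z hz ↦ ⟨_, ⟨z, hz, rfl⟩, mul_dom_le z x⟩
  exact hx (subset ⟨_, ⟨j, hj, rfl⟩, (le_iff_mul_dom.1 hxj).le⟩)

/-- A nonempty lower set closed under the binary joins that exist. Unlike an order ideal it need
not be directed, since incompatible elements have no upper bound. -/
structure IsJoinIdeal (I : Set S) : Prop where
  zero_mem : 0 ∈ I
  isLowerSet : IsLowerSet I
  join_mem : ∀ ⦃x y j⦄, isJoin x y j → x ∈ I → y ∈ I → j ∈ I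

theorem isJoinIdeal_Iic (a : S) : IsJoinIdeal (Set.Iic a) where
  zero_mem := zero_le (a := a)
  isLowerSet := isLowerSet_Iic a
  join_mem _ _ _ hj hx hy := hj.le hx hy

end Filters

variable (S) in
/-- Semisimplicity: every principal down-set is finite. -/
def IsSemisimple : Prop := ∀ a : S, {x : S | nle x a}.Finite

section BooleanInverseSemigroup

variable [IsBooleanInverseSemigroup S] {a j x y z : S} {F I : Set S}

theorem isJoin.restrict (h : isJoin x y j) (hz : z ≤ j) : isJoin (z * dom x) (z * dom y) z := by
  have hjoin := IsBooleanInverseSemigroup.join_mul x y j (dom z) h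
  rwa [le_iff_mul_dom.1 hz, mul_dom_comm_of_le h.left_le hz,
    mul_dom_comm_of_le h.right_le hz] at hjoin

theorem exists_complement (h : x ≤ a) : ∃ y, isJoin x y a ∧ x * dom y = 0 := by
  obtain ⟨g, hg, -, hgx, hjoin⟩ :=
    IsBooleanInverseSemigroup.relcomp (dom a) (dom x) (idem_dom a) (idem_dom x) (dom_mono h)
  refine ⟨a * g, ?_, ?_⟩
  · have hjoin := IsBooleanInverseSemigroup.mul_join _ _ _ a hjoin
    rwa [le_iff_mul_dom.1 h, mul_dom_self] at hjoin
  · rw [mul_dom_comm_of_le h (mul_le_of_idem a hg), mul_assoc, hgx, mul_zero]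

theorem isAtomElem.isPrimeFilter_upSet (ha : isAtomElem a) : isPrimeFilter (upSet a) := by
  refine ⟨isFilterSet_upSet a, fun h ↦ ha.1 (le_zero_iff.1 h), fun x y j hj haj ↦ ?_⟩
  have hjoin := hj.restrict haj
  by_cases hx : a * dom x = 0
  · by_cases hy : a * dom y = 0
    · exact absurd (le_zero_iff.1 (hjoin.le hx.le hy.le)) ha.1
    · exact .inr ((ha.eq_of_le (mul_dom_le a y) hy).symm.trans_le
        (mul_dom_le_right haj hj.right_le))
  · exact .inl ((ha.eq_of_le (mul_dom_le a x) hx).symm.trans_le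
      (mul_dom_le_right haj hj.left_le))

theorem isJoinIdeal_finite_Iic : IsJoinIdeal {a : S | (Set.Iic a).Finite} where
  zero_mem := (Set.finite_singleton 0).subset fun _ hx ↦ le_zero_iff.1 hx
  isLowerSet _ _ hba ha := ha.subset (Set.Iic_subset_Iic.2 hba)
  join_mem x y j hj hx hy := by
    have mapsTo : Set.MapsTo (fun z ↦ (z * dom x, z * dom y)) (Set.Iic j)
        (Set.Iic x ×ˢ Set.Iic y) :=
      fun z hz ↦ ⟨mul_dom_le_right hz hj.left_le, mul_dom_le_right hz hj.right_le⟩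
    have injOn : Set.InjOn (fun z ↦ (z * dom x, z * dom y)) (Set.Iic j) := by
      intro z hz w hw hzw
      obtain ⟨hx_eq, hy_eq⟩ := Prod.mk.inj hzw
      have hjoin := hj.restrict hz
      rw [hx_eq, hy_eq] at hjoin
      exact hjoin.unique (hj.restrict hw)
    exact .of_injOn mapsTo injOn (hx.prod hy)

theorem IsJoinIdeal.isPrimeFilter_of_maximal (hI : IsJoinIdeal I)
    (hF : Maximal (fun F ↦ isFilterSet F ∧ Disjoint F I) F) : isPrimeFilter F := by
  obtain ⟨filter, disjoint⟩ := hF.prop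
  refine ⟨filter, fun h ↦ Set.disjoint_left.1 disjoint h hI.zero_mem, fun x y j hj hjF ↦ ?_⟩
  by_contra! h
  obtain ⟨z, hz, hzI⟩ := exists_mul_dom_mem_of_maximal hI.isLowerSet hF hjF hj.left_le h.1
  obtain ⟨w, hw, hwI⟩ := exists_mul_dom_mem_of_maximal hI.isLowerSet hF hjF hj.right_le h.2
  obtain ⟨u, hu, huz, huw⟩ := filter.directedOn z hz w hw
  obtain ⟨v, hv, hvu, hvj⟩ := filter.directedOn u hu j hjF
  have hvx : v * dom x ∈ I := hI.isLowerSet (mul_le_mul_left (hvu.trans huz) _) hzI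
  have hvy : v * dom y ∈ I := hI.isLowerSet (mul_le_mul_left (hvu.trans huw) _) hwI
  exact Set.disjoint_left.1 disjoint hv (hI.join_mem (hj.restrict hvj) hvx hvy)

theorem IsJoinIdeal.exists_isPrimeFilter (hI : IsJoinIdeal I) (ha : a ∉ I) :
    ∃ F, isPrimeFilter F ∧ a ∈ F ∧ Disjoint F I := by
  obtain ⟨F, haF, hF⟩ := exists_maximal_filter_disjoint hI.isLowerSet ha
  exact ⟨F, hI.isPrimeFilter_of_maximal hF, haF, hF.prop.2⟩

theorem exists_isPrimeFilter_mem_notMem (h : ¬a ≤ x) : ∃ F, isPrimeFilter F ∧ a ∈ F ∧ x ∉ F := by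
  obtain ⟨F, hF, haF, disjoint⟩ := (isJoinIdeal_Iic x).exists_isPrimeFilter h
  exact ⟨F, hF, haF, Set.disjoint_right.1 disjoint (le_refl x)⟩

theorem isPrimeFilter.isAtomElem_of_minimal (hF : isPrimeFilter F) (ha : Minimal (· ∈ F) a) :
    isAtomElem a := by
  refine ⟨ne_of_mem_of_not_mem ha.prop hF.2.1, fun x hx ↦ ?_⟩
  have hxa : x ≤ a := hx
  obtain ⟨y, hjoin, hxy⟩ := exists_complement hxa
  rcases hF.2.2 x y a hjoin ha.prop with hxF | hyF
  · exact .inl (ha.eq_of_le hxF hxa)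
  · right
    calc x = a * dom x := (le_iff_mul_dom.1 hxa).symm
      _ = x * dom a := mul_dom_comm_of_le le_rfl hxa
      _ = 0 := by rw [← ha.eq_of_le hyF hjoin.right_le, hxy]

theorem IsSemisimple.exists_isAtomElem_mem (hS : IsSemisimple S) (hF : isPrimeFilter F) :
    ∃ a ∈ F, isAtomElem a := by
  obtain ⟨b, hb⟩ := hF.1.1
  obtain ⟨a, ha⟩ := ((hS b).inter_of_right F).exists_minimal ⟨b, hb, le_refl b⟩
  have minimal : Minimal (· ∈ F) a :=
    ⟨ha.prop.1, fun c hc hca ↦ ha.le_of_le ⟨hc, le_trans hca ha.prop.2⟩ hca⟩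
  exact ⟨a, ha.prop.1, hF.isAtomElem_of_minimal minimal⟩

theorem isSemisimple_iff_forall_exists_isAtomElem_mem :
    IsSemisimple S ↔ ∀ F : Set S, isPrimeFilter F → ∃ a ∈ F, isAtomElem a := by
  refine ⟨fun hS F ↦ hS.exists_isAtomElem_mem, fun h a ↦ ?_⟩
  by_contra infinite
  obtain ⟨F, hF, -, disjoint⟩ := isJoinIdeal_finite_Iic.exists_isPrimeFilter infinite
  obtain ⟨b, hbF, hb⟩ := h F hF
  exact Set.disjoint_left.1 disjoint hbF ((Set.toFinite {b, 0}).subset hb.2)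

end BooleanInverseSemigroup

section Topology

/-- The basic open set `V_a` of prime filters containing `a`. -/
def basicOpen (a : S) : Set (PrimeFilters S) := {F | a ∈ F.val}

theorem generateFrom_basicOpen_eq_bot_iff :
    TopologicalSpace.generateFrom {U : Set (PrimeFilters S) | ∃ a, U = basicOpen a} = ⊥ ↔
      ∀ F : PrimeFilters S, ∃ a, basicOpen a = {F} := by
  let _ := TopologicalSpace.generateFrom {U : Set (PrimeFilters S) | ∃ a, U = basicOpen a}
  have basis : TopologicalSpace.IsTopologicalBasis
      {U : Set (PrimeFilters S) | ∃ a, U = basicOpen a} := by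
    refine ⟨?_, ?_, rfl⟩
    · rintro _ ⟨a, rfl⟩ _ ⟨b, rfl⟩ F ⟨ha, hb⟩
      obtain ⟨c, hc, hca, hcb⟩ := F.2.1.2.1 a ha b hb
      exact ⟨basicOpen c, ⟨c, rfl⟩, hc,
        fun G hG ↦ ⟨G.2.1.2.2 c hG a hca, G.2.1.2.2 c hG b hcb⟩⟩
    · refine Set.eq_univ_of_forall fun F ↦ ?_
      obtain ⟨a, ha⟩ := F.2.1.1
      exact ⟨basicOpen a, ⟨a, rfl⟩, ha⟩
  refine (Iff.intro DiscreteTopology.mk (·.eq_bot)).trans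
    (discreteTopology_iff_isOpen_singleton.trans <| forall_congr' fun F ↦ ?_)
  refine ⟨fun hopen ↦ ?_, fun ⟨a, ha⟩ ↦ ?_⟩
  · obtain ⟨_, ⟨a, rfl⟩, ha, subset⟩ := basis.exists_subset_of_mem_open (Set.mem_singleton F) hopen
    exact ⟨a, subset.antisymm (Set.singleton_subset_iff.2 ha)⟩
  · exact ha ▸ basis.isOpen ⟨a, rfl⟩

variable [IsBooleanInverseSemigroup S]

theorem basicOpen_eq_singleton_iff {a : S} {F : PrimeFilters S} :
    basicOpen a = {F} ↔ isAtomElem a ∧ a ∈ F.val := by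
  constructor
  · intro h
    have haF : a ∈ F.val := h.symm.subset rfl
    have val_eq {G : Set S} (hG : isPrimeFilter G) (haG : a ∈ G) : G = F.val := by
      have mem : ⟨G, hG⟩ ∈ ({F} : Set (PrimeFilters S)) := h.subset haG
      exact congrArg Subtype.val mem
    refine ⟨⟨ne_of_mem_of_not_mem haF F.2.2.1, fun x hxa ↦ or_iff_not_imp_right.2 fun hx ↦ ?_⟩, haF⟩
    obtain ⟨G, hG, hxG, -⟩ := exists_isPrimeFilter_mem_notMem (mt le_zero_iff.1 hx)
    by_contra hne
    obtain ⟨H, hH, haH, hxH⟩ :=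
      exists_isPrimeFilter_mem_notMem (fun hax : a ≤ x ↦ hne (le_antisymm hxa hax))
    rw [val_eq hH haH, ← val_eq hG (hG.1.isUpperSet hxa hxG)] at hxH
    exact hxH hxG
  · rintro ⟨ha, haF⟩
    refine Set.Subset.antisymm (fun G haG ↦ Subtype.ext ?_) (Set.singleton_subset_iff.2 haF)
    rw [G.2.eq_upSet_of_mem ha haG, F.2.eq_upSet_of_mem ha haF]

theorem isSemisimple_iff_forall_exists_basicOpen_eq_singleton :
    IsSemisimple S ↔ ∀ F : PrimeFilters S, ∃ a, basicOpen a = {F} := by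
  simp only [isSemisimple_iff_forall_exists_isAtomElem_mem, basicOpen_eq_singleton_iff,
    and_comm (a := isAtomElem _)]
  exact ⟨fun h F ↦ h F.1 F.2, fun h F hF ↦ h ⟨F, hF⟩⟩

end Topology

/-- (1) If a Boolean inverse semigroup `S` is semisimple, then the groupoid `G(S)`
of prime filters of `S` is isomorphic to the groupoid of atoms of `S` under the
restricted product, via the map `a ↦ a↑`: this map is a bijection from atoms onto
prime filters which matches composability (`d(a) = r(b)` iff
`(F⁻¹F)↑ = (G G⁻¹)↑` for the corresponding filters) and products
(`(a · b)↑ = (a↑ b↑)↑`).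
(2) `S` is semisimple iff the topology on `G(S)` generated by the sets
`V_a = {F : a ∈ F}` is discrete. -/
theorem primeFilter_groupoid_of_semisimple (S : Type*) [Mul S] [Zero S] [Inv S]
    [IsBooleanInverseSemigroup S] :
    ((∀ a : S, {x : S | nle x a}.Finite) →
      ((∀ a : S, isAtomElem a → isPrimeFilter (upSet a)) ∧
       (∀ a b : S, isAtomElem a → isAtomElem b → upSet a = upSet b → a = b) ∧
       (∀ F : Set S, isPrimeFilter F → ∃ a : S, isAtomElem a ∧ F = upSet a) ∧
       (∀ a b : S, isAtomElem a → isAtomElem b →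
         ((a⁻¹ * a = b * b⁻¹) ↔
           upClosure (setProd (invSet (upSet a)) (upSet a)) =
             upClosure (setProd (upSet b) (invSet (upSet b)))) ∧
         (a⁻¹ * a = b * b⁻¹ →
           upClosure (setProd (upSet a) (upSet b)) = upSet (a * b))))) ∧
    ((∀ a : S, {x : S | nle x a}.Finite) ↔
      TopologicalSpace.generateFrom
          {U : Set (PrimeFilters S) | ∃ a : S, U = {F | a ∈ F.val}} = ⊥) := by
  refine ⟨fun hS ↦ ⟨fun a ha ↦ ha.isPrimeFilter_upSet, fun a b _ _ h ↦ upSet_injective h,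
    fun F hF ↦ ?_, fun a b _ _ ↦ ⟨?_, fun _ ↦ upClosure_setProd_upSet a b⟩⟩, ?_⟩
  · obtain ⟨a, haF, ha⟩ := IsSemisimple.exists_isAtomElem_mem hS hF
    exact ⟨a, ha, hF.eq_upSet_of_mem ha haF⟩
  · rw [invSet_upSet, invSet_upSet, upClosure_setProd_upSet, upClosure_setProd_upSet,
      upSet_injective.eq_iff]
  · exact isSemisimple_iff_forall_exists_basicOpen_eq_singleton.trans
      generateFrom_basicOpen_eq_bot_iff.symm

end Paper
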